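/- For arbitrary matrices A_k (not necessarily of full column or row rank), for every r ≥ 0 the cyclic exact BCD iterates satisfy f(x^{(r+1)}) − f* ≤ R_0 · √(L_max) · (K + 2) · √(Σ_{k=1}^K ‖A_k(x_k^{(r+1)} − x_k^{(r)})‖²). -/

import Mathlib

open Finset

/-- Squared Euclidean norm of a vector in `ℝ^n`. -/
noncomputable def sqnorm {n : ℕ} (v : Fin n → ℝ) : ℝ := ∑ i, v i ^ 2

/-- Euclidean inner product on `ℝ^n`. -/
noncomputable def dotp {n : ℕ} (u v : Fin n → ℝ) : ℝ := ∑ i, u i * v i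

/-- `λ_max(AᵀA)` for a real matrix `A`, characterized as the maximum of `‖Av‖²`
over unit vectors `v`. -/
noncomputable def lamMaxQ {M N : ℕ} (A : Matrix (Fin M) (Fin N) ℝ) : ℝ :=
  sSup {r : ℝ | ∃ v : Fin N → ℝ, sqnorm v = 1 ∧ r = sqnorm (A.mulVec v)}

/-- `λ_min(AᵀA)` for a real matrix `A`, characterized as the minimum of `‖Av‖²`
over unit vectors `v`. -/
noncomputable def lamMinQ {M N : ℕ} (A : Matrix (Fin M) (Fin N) ℝ) : ℝ :=
  sInf {r : ℝ | ∃ v : Fin N → ℝ, sqnorm v = 1 ∧ r = sqnorm (A.mulVec v)}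

/-- `λ_max(AᵀA)` for the concatenated matrix `A = [A_1 ⋯ A_K]`, acting on block
vectors. -/
noncomputable def lamMaxBlock {K M N : ℕ} (A : Fin K → Matrix (Fin M) (Fin N) ℝ) : ℝ :=
  sSup {r : ℝ | ∃ v : Fin K → Fin N → ℝ, (∑ k, sqnorm (v k)) = 1 ∧
    r = sqnorm (∑ k, (A k).mulVec (v k))}

/-- Maximum of a finite family of reals indexed by `Fin K`, `K ≥ 1`. -/
noncomputable def maxOf {K : ℕ} (hK : 1 ≤ K) (P : Fin K → ℝ) : ℝ :=
  Finset.univ.sup' (Finset.univ_nonempty_iff.mpr ⟨⟨0, hK⟩⟩) P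

/-- Minimum of a finite family of reals indexed by `Fin K`, `K ≥ 1`. -/
noncomputable def minOf {K : ℕ} (hK : 1 ≤ K) (P : Fin K → ℝ) : ℝ :=
  Finset.univ.inf' (Finset.univ_nonempty_iff.mpr ⟨⟨0, hK⟩⟩) P

/-- The residual `Σ_k A_k x_k − b`. -/
noncomputable def resid {K M N : ℕ} (A : Fin K → Matrix (Fin M) (Fin N) ℝ)
    (b : Fin M → ℝ) (x : Fin K → Fin N → ℝ) : Fin M → ℝ :=
  (∑ k, (A k).mulVec (x k)) - b

/-- The smooth part `g(x) = (1/2)‖Σ_k A_k x_k − b‖²`. -/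
noncomputable def gq {K M N : ℕ} (A : Fin K → Matrix (Fin M) (Fin N) ℝ)
    (b : Fin M → ℝ) (x : Fin K → Fin N → ℝ) : ℝ :=
  (1 / 2) * sqnorm (resid A b x)

/-- The objective `f(x) = g(x) + Σ_k h_k(x_k)`. -/
noncomputable def fq {K M N : ℕ} (A : Fin K → Matrix (Fin M) (Fin N) ℝ)
    (b : Fin M → ℝ) (h : Fin K → (Fin N → ℝ) → ℝ) (x : Fin K → Fin N → ℝ) : ℝ :=
  gq A b x + ∑ k, h k (x k)

/-- The partial gradient `∇_k g(x) = A_kᵀ (Σ_j A_j x_j − b)`. -/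
noncomputable def gradk {K M N : ℕ} (A : Fin K → Matrix (Fin M) (Fin N) ℝ)
    (b : Fin M → ℝ) (x : Fin K → Fin N → ℝ) (k : Fin K) : Fin N → ℝ :=
  ((A k).transpose).mulVec (resid A b x)

/-- The intermediate point `w_k^{(r+1)}` of the cycle: blocks `j < k` come from
`x^{(r+1)} = xp`, the remaining blocks from `x^{(r)} = x`. -/
def wpt {K N : ℕ} (x xp : Fin K → Fin N → ℝ) (k : Fin K) : Fin K → Fin N → ℝ :=
  fun j => if j < k then xp j else x j

/-- The objective of the `k`-th BCPG prox subproblem at the point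
`w_k^{(r+1)} = wpt x xp k`, evaluated at candidate block `y`. -/
noncomputable def bcpgObj {K M N : ℕ} (A : Fin K → Matrix (Fin M) (Fin N) ℝ)
    (b : Fin M → ℝ) (h : Fin K → (Fin N → ℝ) → ℝ) (P : Fin K → ℝ)
    (x xp : Fin K → Fin N → ℝ) (k : Fin K) (y : Fin N → ℝ) : ℝ :=
  dotp (gradk A b (wpt x xp k) k) (y - x k) + (P k / 2) * sqnorm (y - x k) + h k y

/-- One cycle of cyclic BCPG: `xp = x^{(r+1)}` is obtained from `x = x^{(r)}`
by letting, for `k = 1,…,K`, the `k`-th block minimize the prox subproblem at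
`w_k^{(r+1)}` over `X_k`. -/
def BCPGStep {K M N : ℕ} (A : Fin K → Matrix (Fin M) (Fin N) ℝ)
    (b : Fin M → ℝ) (h : Fin K → (Fin N → ℝ) → ℝ)
    (X : Fin K → Set (Fin N → ℝ)) (P : Fin K → ℝ)
    (x xp : Fin K → Fin N → ℝ) : Prop :=
  ∀ k : Fin K, xp k ∈ X k ∧ ∀ y ∈ X k,
    bcpgObj A b h P x xp k (xp k) ≤ bcpgObj A b h P x xp k y

/-- One cycle of cyclic exact BCD: `xp = x^{(r+1)}` is obtained from
`x = x^{(r)}` by letting, for `k = 1,…,K`, the `k`-th block minimize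
`f(x_1^{(r+1)},…,x_{k−1}^{(r+1)}, ·, x_{k+1}^{(r)},…,x_K^{(r)})` over `X_k`. -/
def BCDStep {K M N : ℕ} (A : Fin K → Matrix (Fin M) (Fin N) ℝ)
    (b : Fin M → ℝ) (h : Fin K → (Fin N → ℝ) → ℝ)
    (X : Fin K → Set (Fin N → ℝ))
    (x xp : Fin K → Fin N → ℝ) : Prop :=
  ∀ k : Fin K, xp k ∈ X k ∧ ∀ y ∈ X k,
    fq A b h (Function.update (wpt x xp k) k (xp k)) ≤
      fq A b h (Function.update (wpt x xp k) k y)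

lemma dotp_add_right' {n : ℕ} (u v w : Fin n → ℝ) : dotp u (v + w) = dotp u v + dotp u w := by
  simp [dotp, mul_add, Finset.sum_add_distrib]

lemma dotp_smul_right' {n : ℕ} (u v : Fin n → ℝ) (t : ℝ) : dotp u (t • v) = t * dotp u v := by
  simp only [dotp, Finset.mul_sum, Pi.smul_apply, smul_eq_mul]
  exact Finset.sum_congr rfl fun i _ => by ring

lemma dotp_sum_right' {n : ℕ} {ι : Type*} (s : Finset ι) (u : Fin n → ℝ) (v : ι → Fin n → ℝ) :
    dotp u (∑ k ∈ s, v k) = ∑ k ∈ s, dotp u (v k) := by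
  simp only [dotp, Finset.sum_apply, Finset.mul_sum]
  exact Finset.sum_comm

lemma dotp_comm' {n : ℕ} (u v : Fin n → ℝ) : dotp u v = dotp v u := by
  simp only [dotp, mul_comm]

lemma sqnorm_nonneg' {n : ℕ} (v : Fin n → ℝ) : 0 ≤ sqnorm v :=
  Finset.sum_nonneg fun i _ => sq_nonneg _

lemma sqnorm_add' {n : ℕ} (u v : Fin n → ℝ) :
    sqnorm (u + v) = sqnorm u + 2 * dotp u v + sqnorm v := by
  simp only [sqnorm, dotp, Finset.mul_sum, ← Finset.sum_add_distrib, Pi.add_apply]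
  exact Finset.sum_congr rfl fun i _ => by ring

lemma sqnorm_smul' {n : ℕ} (t : ℝ) (v : Fin n → ℝ) : sqnorm (t • v) = t ^ 2 * sqnorm v := by
  simp only [sqnorm, Finset.mul_sum, Pi.smul_apply, smul_eq_mul, mul_pow]

lemma abs_dotp_le' {n : ℕ} (u v : Fin n → ℝ) :
    |dotp u v| ≤ Real.sqrt (sqnorm u) * Real.sqrt (sqnorm v) := by
  rw [← Real.sqrt_mul (sqnorm_nonneg' u)]
  apply Real.abs_le_sqrt
  exact Finset.sum_mul_sq_le_sq_mul_sq _ _ _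

lemma sqnorm_eq_zero' {n : ℕ} {v : Fin n → ℝ} (hv : sqnorm v = 0) : v = 0 := by
  funext i
  have := (Finset.sum_eq_zero_iff_of_nonneg (fun i _ => sq_nonneg (v i))).1 hv i (Finset.mem_univ i)
  simpa using this

lemma lamMaxQ_nonneg' {M N : ℕ} (A : Matrix (Fin M) (Fin N) ℝ) : 0 ≤ lamMaxQ A := by
  apply Real.sSup_nonneg
  rintro r ⟨v, _, rfl⟩
  exact sqnorm_nonneg' _

lemma sqnorm_mulVec_le' {M N : ℕ} (A : Matrix (Fin M) (Fin N) ℝ) (v : Fin N → ℝ) :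
    sqnorm (A.mulVec v) ≤ lamMaxQ A * sqnorm v := by
  have hb : BddAbove {r : ℝ | ∃ v : Fin N → ℝ, sqnorm v = 1 ∧ r = sqnorm (A.mulVec v)} := by
    refine ⟨∑ i, ∑ j, A i j ^ 2, ?_⟩
    rintro r ⟨v, hv, rfl⟩
    apply Finset.sum_le_sum
    intro i _
    have := Finset.sum_mul_sq_le_sq_mul_sq Finset.univ (fun j => A i j) v
    have h2 : ∑ j, v j ^ 2 = 1 := hv
    rw [h2, mul_one] at this
    exact this
  rcases (sqnorm_nonneg' v).eq_or_lt with h0 | h0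
  · have := sqnorm_eq_zero' h0.symm
    subst this
    simp [sqnorm]
  · set s := Real.sqrt (sqnorm v) with hs
    have hsp : 0 < s := Real.sqrt_pos.2 h0
    have hss : s ^ 2 = sqnorm v := Real.sq_sqrt h0.le
    have hmem : sqnorm (A.mulVec (s⁻¹ • v)) ≤ lamMaxQ A := by
      apply le_csSup hb
      refine ⟨_, ?_, rfl⟩
      rw [sqnorm_smul', ← hss]
      field_simp
    rw [Matrix.mulVec_smul, sqnorm_smul'] at hmem
    rw [inv_pow, hss, inv_mul_eq_div, div_le_iff₀ h0] at hmem
    exact hmem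

lemma resid_update' {K M N : ℕ} (A : Fin K → Matrix (Fin M) (Fin N) ℝ)
    (b : Fin M → ℝ) (w : Fin K → Fin N → ℝ) (k : Fin K) (y z : Fin N → ℝ) :
    resid A b (Function.update w k y) =
      resid A b (Function.update w k z) + (A k).mulVec (y - z) := by
  have key : ∀ y, ∑ j, (A j).mulVec (Function.update w k y j) =
      (A k).mulVec y + ∑ j ∈ Finset.univ.erase k, (A j).mulVec (w j) := by
    intro y
    rw [← Finset.add_sum_erase _ _ (Finset.mem_univ k)]
    congr 1
    · simp
    · refine Finset.sum_congr rfl fun j hj => ?_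
      rw [Function.update_of_ne (Finset.ne_of_mem_erase hj)]
  simp only [resid, key, Matrix.mulVec_sub]
  abel

lemma fq_update' {K M N : ℕ} (A : Fin K → Matrix (Fin M) (Fin N) ℝ)
    (b : Fin M → ℝ) (h : Fin K → (Fin N → ℝ) → ℝ)
    (w : Fin K → Fin N → ℝ) (k : Fin K) (y z : Fin N → ℝ) :
    fq A b h (Function.update w k y) - fq A b h (Function.update w k z) =
      dotp (resid A b (Function.update w k z)) ((A k).mulVec (y - z)) +
      1 / 2 * sqnorm ((A k).mulVec (y - z)) + (h k y - h k z) := by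
  have key : ∀ y, ∑ j, h j (Function.update w k y j) =
      h k y + ∑ j ∈ Finset.univ.erase k, h j (w j) := by
    intro y
    rw [← Finset.add_sum_erase _ _ (Finset.mem_univ k)]
    congr 1
    · simp
    · refine Finset.sum_congr rfl fun j hj => ?_
      rw [Function.update_of_ne (Finset.ne_of_mem_erase hj)]
  simp only [fq, gq, key]
  rw [resid_update' A b w k y z, sqnorm_add']
  ring

lemma lim_nonneg' (c q : ℝ) (H : ∀ t : ℝ, 0 < t → t ≤ 1 → 0 ≤ t * c + t ^ 2 * q) : 0 ≤ c := by
  by_contra hc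
  push Not at hc
  have hq : 0 < |q| + 1 - c := by have := abs_nonneg q; linarith
  have ht : 0 < -c / (|q| + 1 - c) := div_pos (by linarith) hq
  have := H (-c / (|q| + 1 - c)) ht ((div_le_one hq).2 (by have := abs_nonneg q; linarith))
  set t := -c / (|q| + 1 - c) with htd
  have e : t * (|q| + 1 - c) = -c := by rw [htd]; field_simp
  have h1 : 0 ≤ c + t * q := by
    by_contra hh
    push Not at hh
    nlinarith
  have h2 : t * q ≤ t * |q| := mul_le_mul_of_nonneg_left (le_abs_self q) ht.le
  nlinarith

lemma opt' {K M N : ℕ} (A : Fin K → Matrix (Fin M) (Fin N) ℝ)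
    (b : Fin M → ℝ) (h : Fin K → (Fin N → ℝ) → ℝ) (X : Fin K → Set (Fin N → ℝ))
    (hXcv : ∀ k, Convex ℝ (X k)) (hhcv : ∀ k, ConvexOn ℝ Set.univ (h k))
    (x xp : Fin K → Fin N → ℝ) (hs : BCDStep A b h X x xp) (k : Fin K)
    (y : Fin N → ℝ) (hy : y ∈ X k) :
    0 ≤ dotp (resid A b (Function.update (wpt x xp k) k (xp k))) ((A k).mulVec (y - xp k))
      + (h k y - h k (xp k)) := by
  apply lim_nonneg' _ (1 / 2 * sqnorm ((A k).mulVec (y - xp k)))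
  intro t ht ht1
  obtain ⟨hm, hopt⟩ := hs k
  have hmem : (1 - t) • xp k + t • y ∈ X k :=
    hXcv k hm hy (by linarith) ht.le (by ring)
  have h1 := hopt _ hmem
  have h2 := fq_update' A b h (wpt x xp k) k ((1 - t) • xp k + t • y) (xp k)
  have e : (1 - t) • xp k + t • y - xp k = t • (y - xp k) := by
    module
  rw [e, Matrix.mulVec_smul, dotp_smul_right', sqnorm_smul'] at h2
  have h3 := (hhcv k).2 (Set.mem_univ (xp k)) (Set.mem_univ y)
    (by linarith : 0 ≤ 1 - t) ht.le (by ring)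
  simp only [smul_eq_mul] at h3
  nlinarith

lemma descent' {K M N : ℕ} (A : Fin K → Matrix (Fin M) (Fin N) ℝ)
    (b : Fin M → ℝ) (h : Fin K → (Fin N → ℝ) → ℝ) (X : Fin K → Set (Fin N → ℝ))
    (x xp : Fin K → Fin N → ℝ) (hx : ∀ k, x k ∈ X k) (hs : BCDStep A b h X x xp) :
    fq A b h xp ≤ fq A b h x := by
  have H : ∀ n : ℕ, n ≤ K →
      fq A b h (fun j => if j.val < n then xp j else x j) ≤ fq A b h x := by
    intro n
    induction n with
    | zero => intro _; simp
    | succ n ih =>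
      intro hn
      refine le_trans ?_ (ih (by omega))
      have := (hs ⟨n, hn⟩).2 _ (hx ⟨n, hn⟩)
      have e1 : (fun j : Fin K => if j.val < n + 1 then xp j else x j) =
          Function.update (wpt x xp ⟨n, hn⟩) ⟨n, hn⟩ (xp ⟨n, hn⟩) := by
        funext j
        by_cases hj : j = ⟨n, hn⟩
        · subst hj; simp
        · have hne : j.val ≠ n := fun h => hj (Fin.ext h)
          rw [Function.update_of_ne hj]
          simp only [wpt, Fin.lt_def]
          have hiff : (j.val < n + 1) ↔ j.val < n := by omega
          simp only [hiff]
      have e2 : (fun j : Fin K => if j.val < n then xp j else x j) =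
          Function.update (wpt x xp ⟨n, hn⟩) ⟨n, hn⟩ (x ⟨n, hn⟩) := by
        funext j
        by_cases hj : j = ⟨n, hn⟩
        · subst hj; simp
        · rw [Function.update_of_ne hj]
          simp only [wpt, Fin.lt_def]
      rw [e1, e2]
      exact this
  simpa using H K le_rfl

lemma resid_w' {K M N : ℕ} (A : Fin K → Matrix (Fin M) (Fin N) ℝ)
    (b : Fin M → ℝ) (x xp : Fin K → Fin N → ℝ) (k : Fin K) :
    resid A b xp = resid A b (Function.update (wpt x xp k) k (xp k)) +
      ∑ j, if k < j then (A j).mulVec (xp j - x j) else 0 := by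
  have : ∑ j, (A j).mulVec (xp j) =
      ∑ j, (A j).mulVec (Function.update (wpt x xp k) k (xp k) j) +
      ∑ j, if k < j then (A j).mulVec (xp j - x j) else 0 := by
    rw [← Finset.sum_add_distrib]
    refine Finset.sum_congr rfl fun j _ => ?_
    rcases lt_trichotomy j k with hj | hj | hj
    · simp [hj.ne, wpt, hj, hj.le]
    · subst hj; simp
    · simp [hj.ne', wpt, hj, not_lt_of_gt hj, Matrix.mulVec_sub]
  simp only [resid, this]
  abel

lemma sum_sqrt_le' {K : ℕ} (a : Fin K → ℝ) (ha : ∀ k, 0 ≤ a k) :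
    ∑ k, Real.sqrt (a k) ≤ Real.sqrt K * Real.sqrt (∑ k, a k) := by
  rw [← Real.sqrt_mul (Nat.cast_nonneg K)]
  apply Real.le_sqrt_of_sq_le
  have := sq_sum_le_card_mul_sum_sq (s := Finset.univ) (f := fun k => Real.sqrt (a k))
  simpa [Real.sq_sqrt (ha _)] using this

/-- Lemma 4, case 3: cost-to-go estimate of cyclic exact BCD
for general matrices `A_k`. -/
theorem bcd_cost_to_go_general {K M N : ℕ} (hK : 1 ≤ K) (hM : 1 ≤ M) (hN : 1 ≤ N)
    (A : Fin K → Matrix (Fin M) (Fin N) ℝ) (b : Fin M → ℝ)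
    (X : Fin K → Set (Fin N → ℝ)) (h : Fin K → (Fin N → ℝ) → ℝ)
    (hXne : ∀ k, (X k).Nonempty) (hXcl : ∀ k, IsClosed (X k))
    (hXcv : ∀ k, Convex ℝ (X k))
    (hhcv : ∀ k, ConvexOn ℝ Set.univ (h k))
    (hhlsc : ∀ k, LowerSemicontinuous (h k))
    (x : ℕ → Fin K → Fin N → ℝ) (hx0 : ∀ k, x 0 k ∈ X k)
    (hstep : ∀ r : ℕ, BCDStep A b h X (x r) (x (r + 1)))
    (xstar : Fin K → Fin N → ℝ) (hxstarX : ∀ k, xstar k ∈ X k)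
    (hxstar : ∀ y : Fin K → Fin N → ℝ, (∀ k, y k ∈ X k) → fq A b h xstar ≤ fq A b h y)
    (R0 : ℝ)
    (hR0 : ∀ z : Fin K → Fin N → ℝ, (∀ k, z k ∈ X k) → fq A b h z ≤ fq A b h (x 0) →
      ∀ y : Fin K → Fin N → ℝ, (∀ k, y k ∈ X k) →
        (∀ z' : Fin K → Fin N → ℝ, (∀ k, z' k ∈ X k) → fq A b h y ≤ fq A b h z') →
        Real.sqrt (∑ k, sqnorm (z k - y k)) ≤ R0)
    (r : ℕ) :
    fq A b h (x (r + 1)) - fq A b h xstar ≤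
      R0 * Real.sqrt (maxOf hK (fun k => lamMaxQ (A k))) * ((K : ℝ) + 2) *
        Real.sqrt (∑ k, sqnorm ((A k).mulVec (x (r + 1) k - x r k))) := by
  have hXr : ∀ n k, x n k ∈ X k := by
    intro n
    cases n with
    | zero => exact hx0
    | succ n => exact fun k => (hstep n k).1
  have hdec : ∀ n, fq A b h (x n) ≤ fq A b h (x 0) := by
    intro n
    induction n with
    | zero => exact le_rfl
    | succ n ih => exact (descent' A b h X _ _ (hXr n) (hstep n)).trans ih
  have hR := hR0 (x (r + 1)) (hXr _) (hdec _) xstar hxstarX hxstar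
  have hR0n : 0 ≤ R0 := (Real.sqrt_nonneg _).trans hR
  set L := maxOf hK (fun k => lamMaxQ (A k)) with hL
  have hLk : ∀ k, lamMaxQ (A k) ≤ L := fun k =>
    Finset.le_sup' (fun k => lamMaxQ (A k)) (Finset.mem_univ k)
  have hL0 : 0 ≤ L := (lamMaxQ_nonneg' (A ⟨0, hK⟩)).trans (hLk _)
  set xp := x (r + 1) with hxp
  set d : Fin K → Fin M → ℝ := fun k => (A k).mulVec (xp k - x r k) with hd
  set e : Fin K → Fin M → ℝ := fun k => (A k).mulVec (xstar k - xp k) with he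
  -- quadratic expansion
  have hres : resid A b xstar = resid A b xp + ∑ k, e k := by
    simp only [resid, he, Matrix.mulVec_sub, Finset.sum_sub_distrib]
    abel
  have hexp : fq A b h xp - fq A b h xstar ≤
      ∑ k, -(dotp (resid A b xp) (e k) + (h k (xstar k) - h k (xp k))) := by
    simp only [fq, gq]
    rw [hres, sqnorm_add', dotp_sum_right', Finset.sum_neg_distrib, Finset.sum_add_distrib,
      Finset.sum_sub_distrib]
    have := sqnorm_nonneg' (∑ k, e k)
    linarith
  have hterm : ∀ k, -(dotp (resid A b xp) (e k) + (h k (xstar k) - h k (xp k))) ≤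
      (∑ j, Real.sqrt (sqnorm (d j))) * Real.sqrt (sqnorm (e k)) := by
    intro k
    have h1 := opt' A b h X hXcv hhcv (x r) xp (hstep r) k (xstar k) (hxstarX k)
    have h2 : dotp (resid A b xp) (e k) =
        dotp (resid A b (Function.update (wpt (x r) xp k) k (xp k))) (e k) +
        ∑ j, dotp (e k) (if k < j then d j else 0) := by
      rw [resid_w' A b (x r) xp k, dotp_comm', dotp_add_right', dotp_sum_right', dotp_comm']
    have h3 : -∑ j, dotp (e k) (if k < j then d j else 0) ≤
        (∑ j, Real.sqrt (sqnorm (d j))) * Real.sqrt (sqnorm (e k)) := by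
      rw [← Finset.sum_neg_distrib, Finset.sum_mul]
      refine Finset.sum_le_sum fun j _ => ?_
      split_ifs with hj
      · rw [mul_comm]
        exact (neg_le_abs _).trans (abs_dotp_le' _ _)
      · have : dotp (e k) 0 = 0 := by simp [dotp]
        rw [this, neg_zero]
        positivity
    linarith
  have hsumE : ∑ k, sqnorm (e k) ≤ L * ∑ k, sqnorm (xp k - xstar k) := by
    rw [Finset.mul_sum]
    refine Finset.sum_le_sum fun k _ => ?_
    have e1 : sqnorm (xp k - xstar k) = sqnorm (xstar k - xp k) := by
      simp only [sqnorm, Pi.sub_apply]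
      exact Finset.sum_congr rfl fun i _ => by ring
    rw [e1]
    exact (sqnorm_mulVec_le' _ _).trans
      (mul_le_mul_of_nonneg_right (hLk k) (sqnorm_nonneg' _))
  have hE : Real.sqrt (∑ k, sqnorm (e k)) ≤ Real.sqrt L * R0 := by
    refine (Real.sqrt_le_sqrt hsumE).trans ?_
    rw [Real.sqrt_mul hL0]
    exact mul_le_mul_of_nonneg_left hR (Real.sqrt_nonneg _)
  have hE2 : ∑ k, Real.sqrt (sqnorm (e k)) ≤ Real.sqrt K * (Real.sqrt L * R0) :=
    (sum_sqrt_le' _ fun k => sqnorm_nonneg' _).trans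
      (mul_le_mul_of_nonneg_left hE (Real.sqrt_nonneg _))
  have hD := sum_sqrt_le' (fun k => sqnorm (d k)) fun k => sqnorm_nonneg' _
  set D := Real.sqrt (∑ k, sqnorm (d k)) with hDd
  have hD0 : 0 ≤ D := Real.sqrt_nonneg _
  have hKK : Real.sqrt K * Real.sqrt K = (K : ℝ) := Real.mul_self_sqrt (Nat.cast_nonneg K)
  calc fq A b h xp - fq A b h xstar
      ≤ ∑ k, (∑ j, Real.sqrt (sqnorm (d j))) * Real.sqrt (sqnorm (e k)) :=
        hexp.trans (Finset.sum_le_sum fun k _ => hterm k)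
    _ = (∑ j, Real.sqrt (sqnorm (d j))) * ∑ k, Real.sqrt (sqnorm (e k)) := by
        rw [Finset.mul_sum]
    _ ≤ (Real.sqrt K * D) * (Real.sqrt K * (Real.sqrt L * R0)) :=
        mul_le_mul hD hE2 (Finset.sum_nonneg fun k _ => Real.sqrt_nonneg _) (by positivity)
    _ = R0 * Real.sqrt L * (Real.sqrt K * Real.sqrt K) * D := by ring
    _ ≤ R0 * Real.sqrt L * ((K : ℝ) + 2) * D := by
        rw [hKK]
        gcongr
        linarith
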